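/- Let g be a Riemannian metric and π a symmetric 2-tensor on a 3-manifold, and let h, ϖ be symmetric 2-tensors. Then the linearizations of H and M at (g,π) in direction (h,ϖ), i.e. the derivatives at s = 0 of s ↦ H(g+sh, π+sϖ) and s ↦ M(g+sh, π+sϖ), are given by: DH[g,π](h,ϖ) = −Δ_g tr_g h + D^i D^j h_{ij} − h^{ij} Ric(g)_{ij} + (tr_g π)(tr_g ϖ − π^{ij} h_{ij}) − 2 π^{ij} ϖ_{ij} + 2 h^{ij} g^{kℓ} π_{ik} π_{jℓ}, and DM[g,π](h,ϖ)_i = (div_g ϖ)_i − h^{kℓ} D_k π_{ℓi} − π_i^j g^{kℓ}( D_k h_{ℓj} − ½ D_j h_{kℓ} ) − ½ π^{kℓ} D_i h_{kℓ}, where D is the Levi-Civita covariant derivative of g, Ric(g) its Ricci tensor, and all indices are raised with g. -/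

import Mathlib

noncomputable section

open MeasureTheory Finset

/-! ## Basic geometry on the exterior region of `ℝ³` -/

abbrev Vec : Type := Fin 3 → ℝ
abbrev Mtx : Type := Fin 3 → Fin 3 → ℝ

/-- Coordinate partial derivative. -/
def pd (i : Fin 3) (f : Vec → ℝ) (x : Vec) : ℝ := fderiv ℝ f x (Pi.single i 1)

/-- Euclidean radius `r`. -/
def rad (x : Vec) : ℝ := Real.sqrt (x 0 ^ 2 + x 1 ^ 2 + x 2 ^ 2)

/-- The manifold `Σ = {r ≥ r₀}`. -/
def Sig (r₀ : ℝ) : Set Vec := {x | r₀ ≤ rad x}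

/-- Its boundary `∂Σ = {r = r₀}`. -/
def bdry (r₀ : ℝ) : Set Vec := {x | rad x = r₀}

/-- The identity (Euclidean) matrix. -/
def idMtx : Mtx := fun i j => if i = j then 1 else 0

/-- Inverse matrix. -/
def minv (A : Mtx) : Mtx := fun i j => (Matrix.of A)⁻¹ i j

/-- Volume density `√(det g)`. -/
def dens (g : Vec → Mtx) (x : Vec) : ℝ := Real.sqrt (Matrix.det (Matrix.of (g x)))

/-- Asymptotically flat initial data set on `Σ = {r ≥ r₀}` (Definition 2.1). -/
structure AFData (r₀ : ℝ) : Type where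
  g : Vec → Mtx
  pi : Vec → Mtx
  g_smooth : ContDiff ℝ (⊤ : ℕ∞) g
  pi_smooth : ContDiff ℝ (⊤ : ℕ∞) pi
  g_symm : ∀ x i j, g x i j = g x j i
  pi_symm : ∀ x i j, pi x i j = pi x j i
  g_posdef : ∀ x ∈ Sig r₀, (Matrix.of (g x)).PosDef
  decay : ∀ k : ℕ, ∃ C : ℝ, ∀ x ∈ Sig r₀,
      rad x ^ (k + 1) * ‖iteratedFDeriv ℝ k (fun y => g y - idMtx) x‖
        + rad x ^ (k + 2) * ‖iteratedFDeriv ℝ k pi x‖ ≤ C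

/-! ## Curvature and constraint operators, in coordinates -/

/-- Christoffel symbols `Γ^k_{ij}` of `g`. -/
def Gam (g : Vec → Mtx) (k i j : Fin 3) (x : Vec) : ℝ :=
  (1 / 2) * ∑ l, minv (g x) k l *
    (pd i (fun y => g y l j) x + pd j (fun y => g y l i) x - pd l (fun y => g y i j) x)

/-- Ricci curvature `Ric(g)_{ij}`. -/
def RicT (g : Vec → Mtx) (i j : Fin 3) (x : Vec) : ℝ :=
  (∑ k, pd k (fun y => Gam g k i j y) x) - (∑ k, pd j (fun y => Gam g k k i y) x)
    + ∑ k, ∑ l, (Gam g k k l x * Gam g l i j x - Gam g k j l x * Gam g l k i x)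

/-- Scalar curvature `R(g)`. -/
def scalR (g : Vec → Mtx) (x : Vec) : ℝ := ∑ i, ∑ j, minv (g x) i j * RicT g i j x

/-- Trace `tr_g T` of a 2-tensor. -/
def trT (g T : Vec → Mtx) (x : Vec) : ℝ := ∑ i, ∑ j, minv (g x) i j * T x i j

/-- `|T|²_g`. -/
def normSqT (g T : Vec → Mtx) (x : Vec) : ℝ :=
  ∑ i, ∑ j, ∑ k, ∑ l, minv (g x) i k * minv (g x) j l * T x i j * T x k l

/-- Covariant derivative `D_k T_{ij}` of a 2-tensor. -/
def covD (g T : Vec → Mtx) (k i j : Fin 3) (x : Vec) : ℝ :=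
  pd k (fun y => T y i j) x - ∑ l, (Gam g l k i x * T x l j + Gam g l k j x * T x i l)

/-- Divergence `(div_g T)_i = g^{kl} D_k T_{li}`. -/
def divT (g T : Vec → Mtx) (i : Fin 3) (x : Vec) : ℝ :=
  ∑ k, ∑ l, minv (g x) k l * covD g T k l i x

/-- Hamiltonian constraint `H(g,π) = R(g) + ½ (tr_g π)² - |π|²_g`. -/
def Hc (g p : Vec → Mtx) (x : Vec) : ℝ := scalR g x + (1 / 2) * (trT g p x) ^ 2 - normSqT g p x

/-- The vacuum constraint equations on `Σ`. -/
def VacuumConstraints (g p : Vec → Mtx) (r₀ : ℝ) : Prop :=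
  ∀ x ∈ Sig r₀, Hc g p x = 0 ∧ ∀ i, divT g p i x = 0

/-- Lie derivative `(ℒ_X g)_{ij}`. -/
def lieG (g : Vec → Mtx) (X : Vec → Vec) (x : Vec) : Mtx := fun i j =>
  ∑ k, (X x k * pd k (fun y => g y i j) x
    + g x k j * pd i (fun y => X y k) x + g x i k * pd j (fun y => X y k) x)

/-- Divergence of a vector field, `div_g X = D_i X^i`. -/
def divX (g : Vec → Mtx) (X : Vec → Vec) (x : Vec) : ℝ :=
  (∑ i, pd i (fun y => X y i) x) + ∑ i, ∑ k, Gam g i i k x * X x k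

/-- Modified Lie derivative `L_g X = ℒ_X g - (div_g X) g`. -/
def Lmod (g : Vec → Mtx) (X : Vec → Vec) (x : Vec) : Mtx := fun i j =>
  lieG g X x i j - divX g X x * g x i j

/-- Laplace–Beltrami operator on scalars. -/
def lapl (g : Vec → Mtx) (u : Vec → ℝ) (x : Vec) : ℝ :=
  ∑ i, ∑ j, minv (g x) i j * (pd i (fun y => pd j u y) x - ∑ k, Gam g k i j x * pd k u x)

/-- Raising both indices of a 2-tensor: `T^{ij}`. -/
def raise2 (g T : Vec → Mtx) (x : Vec) (i j : Fin 3) : ℝ :=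
  ∑ a, ∑ b, minv (g x) i a * minv (g x) j b * T x a b

/-! ## The elliptic operator `P`, its formal adjoint and boundary operators -/

/-- Pairs `𝕌 = (u, X)` of a scalar function and a vector field. -/
abbrev PairF : Type := (Vec → ℝ) × (Vec → Vec)

/-- The operator `P` of (4.1). -/
def Pop (g p : Vec → Mtx) (U : PairF) : PairF :=
  (fun x => -8 * lapl g U.1 x - 2 * (∑ i, ∑ j, raise2 g p x i j * lieG g U.2 x i j)
      + trT g p x * divX g U.2 x,
   fun x i => -2 * divT g (Lmod g U.2) i x
      - 8 * (∑ j, ∑ l, minv (g x) j l * p x i l * pd j U.1 x)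
      + 4 * trT g p x * pd i U.1 x)

/-- The operator `P^*`. -/
def PopStar (g p : Vec → Mtx) (U : PairF) : PairF :=
  (fun x => -8 * lapl g U.1 x + 4 * (∑ i, ∑ j, raise2 g p x i j * lieG g U.2 x i j)
      - 4 * divX g (fun y k => trT g p y * U.2 y k) x,
   fun x i => -2 * divT g (Lmod g U.2) i x
      + 4 * (∑ j, ∑ l, minv (g x) j l * p x i l * pd j U.1 x)
      - pd i (fun y => trT g p y * U.1 y) x)

/-- The inward (with respect to `Σ`) unit normal `ν` of `∂Σ` for `g`. -/
def nuV (g : Vec → Mtx) (x : Vec) : Vec := fun i =>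
  (∑ j, minv (g x) i j * x j) /
    Real.sqrt (∑ i, ∑ j, minv (g x) i j * x i * x j)

/-- Normal derivative `∂_ν u`. -/
def dnu (g : Vec → Mtx) (u : Vec → ℝ) (x : Vec) : ℝ := ∑ i, nuV g x i * pd i u x

/-- `g(X, ν)`. -/
def gXnu (g : Vec → Mtx) (X : Vec → Vec) (x : Vec) : ℝ :=
  ∑ i, ∑ j, g x i j * X x i * nuV g x j

/-- `π(X, ν)`. -/
def piXnu (g p : Vec → Mtx) (X : Vec → Vec) (x : Vec) : ℝ :=
  ∑ i, ∑ j, p x i j * X x i * nuV g x j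

/-- Covariant derivative `D_ν X`. -/
def covDnuX (g : Vec → Mtx) (X : Vec → Vec) (x : Vec) : Vec := fun i =>
  ∑ k, nuV g x k * (pd k (fun y => X y i) x + ∑ l, Gam g i k l x * X x l)

/-- The boundary operator `B_ν`. -/
def Bnu (g p : Vec → Mtx) (U : PairF) : PairF :=
  (fun x => -8 * dnu g U.1 x + trT g p x * gXnu g U.2 x - 4 * piXnu g p U.2 x,
   fun x i => -2 * covDnuX g U.2 x i)

/-- The boundary operator `B_ν^*`. -/
def BnuStar (g p : Vec → Mtx) (U : PairF) : PairF :=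
  (fun x => -8 * dnu g U.1 x - 4 * trT g p x * gXnu g U.2 x + 8 * piXnu g p U.2 x,
   fun x i => -2 * covDnuX g U.2 x i)

/-! ## The class `ℰ(∂Σ)` of boundary perturbations -/

/-- An element `F = (b, ω, Z, ξ)` of `ℰ(∂Σ)`. -/
structure EBdry : Type where
  b : Vec → ℝ
  om : Vec → Vec
  Z : Vec → Vec
  xi : Vec → Mtx

/-- Smoothness of an element of `ℰ(∂Σ)`. -/
def EBdry.Smooth (F : EBdry) : Prop :=
  ContDiff ℝ (⊤ : ℕ∞) F.b ∧ ContDiff ℝ (⊤ : ℕ∞) F.om ∧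
    ContDiff ℝ (⊤ : ℕ∞) F.Z ∧ ContDiff ℝ (⊤ : ℕ∞) F.xi

/-- Action of `F ∈ ℰ(∂Σ)` on pairs. -/
def EBdry.app (F : EBdry) (U : PairF) : PairF :=
  (fun x => F.b x * U.1 x + ∑ i, F.om x i * U.2 x i,
   fun x i => U.1 x * F.Z x i + ∑ j, F.xi x i j * U.2 x j)

/-- The transpose `F^* = (b, Z^♭, ω^♯, ξ^♮)`. -/
def EBdry.star (g : Vec → Mtx) (F : EBdry) : EBdry where
  b := F.b
  om := fun x i => ∑ j, g x i j * F.Z x j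
  Z := fun x i => ∑ j, minv (g x) i j * F.om x j
  xi := fun x i j => ∑ l, ∑ k, minv (g x) j l * F.xi x l k * g x k i

/-- The identity element `Id ∈ ℰ(∂Σ)`. -/
def EBdry.id : EBdry where
  b := fun _ => 1
  om := fun _ _ => 0
  Z := fun _ _ => 0
  xi := fun _ => idMtx

/-- The boundary operator `B_ν + F`. -/
def PBC (g p : Vec → Mtx) (F : EBdry) (U : PairF) : PairF := Bnu g p U + F.app U

/-- The boundary operator `B_ν^* + F^*`. -/
def PBCStar (g p : Vec → Mtx) (F : EBdry) (U : PairF) : PairF :=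
  BnuStar g p U + (F.star g).app U

/-! ## Weighted Sobolev spaces -/

/-- Integrand of the weighted Sobolev seminorm of order `n` and weight `δ`. -/
def wIntegrand {E : Type} [NormedAddCommGroup E] [NormedSpace ℝ E]
    (g : Vec → Mtx) (n : ℕ) (δ : ℝ) (f : Vec → E) (x : Vec) : ℝ :=
  ((1 + rad x) ^ (-δ - 3 / 2 + (n : ℝ)) * ‖iteratedFDeriv ℝ n f x‖) ^ 2 * dens g x

/-- Membership in `H^k_δ(Σ)`. -/
def MemW {E : Type} [NormedAddCommGroup E] [NormedSpace ℝ E]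
    (g : Vec → Mtx) (r₀ : ℝ) (k : ℕ) (δ : ℝ) (f : Vec → E) : Prop :=
  ∀ n ≤ k, IntegrableOn (wIntegrand g n δ f) (Sig r₀) volume

/-- The `H^k_δ(Σ)` norm. -/
def wNorm {E : Type} [NormedAddCommGroup E] [NormedSpace ℝ E]
    (g : Vec → Mtx) (r₀ : ℝ) (k : ℕ) (δ : ℝ) (f : Vec → E) : ℝ :=
  ∑ n ∈ Finset.range (k + 1), Real.sqrt (∫ x in Sig r₀, wIntegrand g n δ f x)

/-- Membership of a pair in `H^k_δ(Σ)`. -/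
def MemWPair (g : Vec → Mtx) (r₀ : ℝ) (k : ℕ) (δ : ℝ) (U : PairF) : Prop :=
  MemW g r₀ k δ U.1 ∧ MemW g r₀ k δ U.2

/-- The `H^k_δ(Σ)` norm of a pair. -/
def wNormPair (g : Vec → Mtx) (r₀ : ℝ) (k : ℕ) (δ : ℝ) (U : PairF) : ℝ :=
  wNorm g r₀ k δ U.1 + wNorm g r₀ k δ U.2

/-- Pointwise inner product `𝕌·𝕍 = uv + g(X,Y)` of two pairs. -/
def dotPair (g : Vec → Mtx) (U V : PairF) (x : Vec) : ℝ :=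
  U.1 x * V.1 x + ∑ i, ∑ j, g x i j * U.2 x i * V.2 x j

/-- `L²(Σ)` inner product of pairs (with respect to the volume form of `g`). -/
def L2inner (g : Vec → Mtx) (r₀ : ℝ) (U V : PairF) : ℝ :=
  ∫ x in Sig r₀, dotPair g U V x * dens g x

/-! ## Boundary integrals and boundary Sobolev norms -/

/-- Spherical parametrization of the sphere of radius `r`. -/
def sphPt (r θ φ : ℝ) : Vec :=
  ![r * Real.sin θ * Real.cos φ, r * Real.sin θ * Real.sin φ, r * Real.cos θ]

def sphTh (r θ φ : ℝ) : Vec :=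
  ![r * Real.cos θ * Real.cos φ, r * Real.cos θ * Real.sin φ, -(r * Real.sin θ)]

def sphPh (r θ φ : ℝ) : Vec :=
  ![-(r * Real.sin θ * Real.sin φ), r * Real.sin θ * Real.cos φ, 0]

/-- Value of the metric on two vectors. -/
def gOf (g : Vec → Mtx) (x v w : Vec) : ℝ := ∑ i, ∑ j, g x i j * v i * w j

/-- Area density of the metric induced by `g` on `∂Σ`. -/
def bdryDens (g : Vec → Mtx) (r₀ θ φ : ℝ) : ℝ :=
  Real.sqrt (gOf g (sphPt r₀ θ φ) (sphTh r₀ θ φ) (sphTh r₀ θ φ)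
      * gOf g (sphPt r₀ θ φ) (sphPh r₀ θ φ) (sphPh r₀ θ φ)
    - gOf g (sphPt r₀ θ φ) (sphTh r₀ θ φ) (sphPh r₀ θ φ) ^ 2)

/-- Integral over `∂Σ` with respect to the area measure induced by `g`. -/
def bdryIntegral (g : Vec → Mtx) (r₀ : ℝ) (f : Vec → ℝ) : ℝ :=
  ∫ θ in (0 : ℝ)..Real.pi, ∫ φ in (0 : ℝ)..(2 * Real.pi),
    f (sphPt r₀ θ φ) * bdryDens g r₀ θ φ

/-- A fixed collar neighbourhood of `∂Σ` in `Σ`. -/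
def annulus (r₀ : ℝ) : Set Vec := {x | r₀ ≤ rad x ∧ rad x ≤ r₀ + 1}

/-- The `H¹` norm on the collar, used to define the trace norm. -/
def H1AnnNorm {E : Type} [NormedAddCommGroup E] [NormedSpace ℝ E]
    (r₀ : ℝ) (u : Vec → E) : ℝ :=
  Real.sqrt (∫ x in annulus r₀, (‖u x‖ ^ 2 + ‖fderiv ℝ u x‖ ^ 2))

/-- Membership in the trace space `H^{1/2}(∂Σ)`. -/
def MemHHalf {E : Type} [NormedAddCommGroup E] [NormedSpace ℝ E]
    (r₀ : ℝ) (h : Vec → E) : Prop :=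
  ∃ u : Vec → E, (∀ x ∈ bdry r₀, u x = h x) ∧
    IntegrableOn (fun x => ‖u x‖ ^ 2 + ‖fderiv ℝ u x‖ ^ 2) (annulus r₀) volume

/-- The `H^{1/2}(∂Σ)` (trace) norm. -/
def hHalfNorm {E : Type} [NormedAddCommGroup E] [NormedSpace ℝ E]
    (r₀ : ℝ) (h : Vec → E) : ℝ :=
  sInf {c : ℝ | 0 ≤ c ∧ ∃ u : Vec → E, (∀ x ∈ bdry r₀, u x = h x) ∧
    IntegrableOn (fun x => ‖u x‖ ^ 2 + ‖fderiv ℝ u x‖ ^ 2) (annulus r₀) volume ∧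
    H1AnnNorm r₀ u ≤ c}

/-- `H^{1/2}(∂Σ)` membership for pairs. -/
def MemHHalfPair (r₀ : ℝ) (U : PairF) : Prop := MemHHalf r₀ U.1 ∧ MemHHalf r₀ U.2

/-- `H^{1/2}(∂Σ)` norm of a pair. -/
def hHalfNormPair (r₀ : ℝ) (U : PairF) : ℝ := hHalfNorm r₀ U.1 + hHalfNorm r₀ U.2

/-! ## Kernels of the boundary value problems -/

/-- The kernel of `P_{F,δ} = (P, B_ν + F) : H²_δ(Σ) → L²_{δ-2}(Σ) × H^{1/2}(∂Σ)`. -/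
def kerSet (g p : Vec → Mtx) (r₀ : ℝ) (F : EBdry) (δ : ℝ) : Set PairF :=
  {U | MemWPair g r₀ 2 δ U
    ∧ (∀ x ∈ Sig r₀, (Pop g p U).1 x = 0 ∧ ∀ i, (Pop g p U).2 x i = 0)
    ∧ (∀ x ∈ bdry r₀, (PBC g p F U).1 x = 0 ∧ ∀ i, (PBC g p F U).2 x i = 0)}

/-- The kernel of `P^*_{F,δ} = (P^*, B_ν^* + F^*)`. -/
def kerSetStar (g p : Vec → Mtx) (r₀ : ℝ) (F : EBdry) (δ : ℝ) : Set PairF :=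
  {U | MemWPair g r₀ 2 δ U
    ∧ (∀ x ∈ Sig r₀, (PopStar g p U).1 x = 0 ∧ ∀ i, (PopStar g p U).2 x i = 0)
    ∧ (∀ x ∈ bdry r₀, (PBCStar g p F U).1 x = 0 ∧ ∀ i, (PBCStar g p F U).2 x i = 0)}

/-- Dimension (as a cardinal) of the kernel of `P_{F,δ}`. -/
def kerRank (g p : Vec → Mtx) (r₀ : ℝ) (F : EBdry) (δ : ℝ) : Cardinal :=
  Module.rank ℝ (Submodule.span ℝ (kerSet g p r₀ F δ))

/-- Dimension (as a cardinal) of the kernel of `P^*_{F,δ}`. -/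
def kerRankStar (g p : Vec → Mtx) (r₀ : ℝ) (F : EBdry) (δ : ℝ) : Cardinal :=
  Module.rank ℝ (Submodule.span ℝ (kerSetStar g p r₀ F δ))


/-! ## Statement 6: Lemma 2.5, the linearized constraint operators -/

/-- Second covariant derivative `D_a D_b T_{ij}` of a 2-tensor. -/
def covD2T (g T : Vec → Mtx) (a b i j : Fin 3) (x : Vec) : ℝ :=
  pd a (fun y => covD g T b i j y) x
    - ∑ c, (Gam g c a b x * covD g T c i j x
        + Gam g c a i x * covD g T b c j x
        + Gam g c a j x * covD g T b i c x)

/-- The linearization `DH[g,π](h,ϖ)` (formula (2.7)). -/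
def DHlin (g p h ϖ : Vec → Mtx) (x : Vec) : ℝ :=
  -- `−Δ_g tr_g h + D^i D^j h_{ij} − h^{ij} Ric(g)_{ij}`
  - lapl g (fun y => trT g h y) x
    + (∑ i, ∑ j, ∑ a, ∑ b, minv (g x) i a * minv (g x) j b * covD2T g h a b i j x)
    - (∑ i, ∑ j, raise2 g h x i j * RicT g i j x)
  -- `+ tr_g π (tr_g ϖ − π^{ij} h_{ij}) − 2 π^{ij} ϖ_{ij} + 2 h^{ij} g^{kℓ} π_{ik} π_{jℓ}`
    + trT g p x * (trT g ϖ x - ∑ i, ∑ j, raise2 g p x i j * h x i j)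
    - 2 * (∑ i, ∑ j, raise2 g p x i j * ϖ x i j)
    + 2 * (∑ i, ∑ j, raise2 g h x i j * ∑ k, ∑ l, minv (g x) k l * p x i k * p x j l)

/-- The linearization `DM[g,π](h,ϖ)_i` (formula (2.8)). -/
def DMlin (g p h ϖ : Vec → Mtx) (i : Fin 3) (x : Vec) : ℝ :=
  -- `(div_g ϖ)_i − h^{kℓ} D_k π_{ℓi}`
  divT g ϖ i x - (∑ k, ∑ l, raise2 g h x k l * covD g p k l i x)
  -- `− π_i^j g^{kℓ} (D_k h_{ℓj} − ½ D_j h_{kℓ})`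
    - (∑ j, (∑ a, minv (g x) j a * p x i a) *
        ∑ k, ∑ l, minv (g x) k l * (covD g h k l j x - (1 / 2) * covD g h j k l x))
  -- `− ½ π^{kℓ} D_i h_{kℓ}`
    - (1 / 2) * (∑ k, ∑ l, raise2 g p x k l * covD g h i k l x)

/-! ## Calculus helpers -/

lemma minv_eq (A : Mtx) (i j : Fin 3) :
    minv A i j = ((Matrix.of A).det)⁻¹ * (Matrix.of A).adjugate i j := by
  unfold minv
  rw [Matrix.inv_def, Matrix.smul_apply, Ring.inverse_eq_inv', smul_eq_mul]

lemma contDiffAt_minv {E : Type} [NormedAddCommGroup E] [NormedSpace ℝ E] {n : WithTop ℕ∞}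
    (A : E → Mtx) (x : E) (hA : ∀ i j, ContDiffAt ℝ n (fun y => A y i j) x)
    (hdet : (Matrix.of (A x)).det ≠ 0) (i j : Fin 3) :
    ContDiffAt ℝ n (fun y => minv (A y) i j) x := by
  simp only [minv_eq]
  refine ContDiffAt.mul (ContDiffAt.inv ?_ hdet) ?_
  · simp only [Matrix.det_fin_three, Matrix.of_apply]
    fun_prop
  · fin_cases i <;> fin_cases j <;>
      simp [Matrix.adjugate_fin_three] <;> fun_prop

lemma minv_mul (A : Mtx) (hdet : (Matrix.of A).det ≠ 0) (i j : Fin 3) :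
    ∑ b, minv A i b * A b j = if i = j then 1 else 0 := by
  have := congrFun (congrFun (Matrix.nonsing_inv_mul (Matrix.of A) (isUnit_iff_ne_zero.2 hdet)) i) j
  rw [Matrix.mul_apply, Matrix.one_apply] at this
  exact this

lemma mul_minv (A : Mtx) (hdet : (Matrix.of A).det ≠ 0) (i j : Fin 3) :
    ∑ b, A i b * minv A b j = if i = j then 1 else 0 := by
  have := congrFun (congrFun (Matrix.mul_nonsing_inv (Matrix.of A) (isUnit_iff_ne_zero.2 hdet)) i) j
  rw [Matrix.mul_apply, Matrix.one_apply] at this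
  exact this

lemma minv_symm (A : Mtx) (hA : ∀ i j, A i j = A j i) (i j : Fin 3) :
    minv A i j = minv A j i := by
  have h : (Matrix.of A).transpose = Matrix.of A := by
    ext a b; simpa using hA b a
  have := congrFun (congrFun (Matrix.transpose_nonsing_inv (Matrix.of A)) j) i
  rw [h] at this
  simpa [minv] using this

/-- Derivative of the inverse matrix in direction `v`. -/
lemma fderiv_minv {E : Type} [NormedAddCommGroup E] [NormedSpace ℝ E]
    (A : E → Mtx) (x v : E) (hA : ∀ i j, ContDiffAt ℝ 1 (fun y => A y i j) x)
    (hdet : (Matrix.of (A x)).det ≠ 0) (i j : Fin 3) :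
    fderiv ℝ (fun y => minv (A y) i j) x v
      = - ∑ a, ∑ b, minv (A x) i a * minv (A x) b j * fderiv ℝ (fun y => A y a b) x v := by
  have hu : ∀ i j, DifferentiableAt ℝ (fun y => minv (A y) i j) x := fun i j =>
    (contDiffAt_minv A x hA hdet i j).differentiableAt (by norm_num)
  have hA' : ∀ i j, DifferentiableAt ℝ (fun y => A y i j) x := fun i j =>
    (hA i j).differentiableAt (by norm_num)
  have hdc : ContinuousAt (fun y => (Matrix.of (A y)).det) x := by
    simp only [Matrix.det_fin_three, Matrix.of_apply]
    have := fun i j => (hA' i j).continuousAt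
    fun_prop
  have hev : ∀ᶠ y in nhds x, (Matrix.of (A y)).det ≠ 0 := hdc.eventually_ne hdet
  have key : ∀ c : Fin 3, ∑ b, (minv (A x) i b * fderiv ℝ (fun y => A y b c) x v
      + A x b c * fderiv ℝ (fun y => minv (A y) i b) x v) = 0 := by
    intro c
    have h1 : (fun y => ∑ b, minv (A y) i b * A y b c) =ᶠ[nhds x]
        fun _ => if i = c then (1 : ℝ) else 0 := by
      filter_upwards [hev] with y hy using minv_mul (A y) hy i c
    have h2 := h1.fderiv_eq (𝕜 := ℝ)
    rw [fderiv_fun_sum (fun b _ => (hu i b).fun_mul (hA' b c))] at h2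
    have h3 := congrArg (fun L => L v) h2
    simp only [fderiv_fun_const, Pi.zero_apply] at h3
    rw [_root_.sum_apply] at h3
    rw [show (0 : E →L[ℝ] ℝ) v = 0 from rfl] at h3
    rw [← h3]
    refine Finset.sum_congr rfl fun b _ => ?_
    rw [fderiv_fun_mul (hu i b) (hA' b c)]
    simp
  have m := fun a => mul_minv (A x) hdet a j
  have k0 := key 0
  have k1 := key 1
  have k2 := key 2
  have m0 := m 0
  have m1 := m 1
  have m2 := m 2
  have e : fderiv ℝ (fun y => minv (A y) i j) x v =
      ∑ b, fderiv ℝ (fun y => minv (A y) i b) x v * (if b = j then 1 else 0) := by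
    simp
  rw [e]
  simp only [Fin.sum_univ_three, Fin.isValue] at k0 k1 k2 m0 m1 m2 ⊢
  rw [← m0, ← m1, ← m2]
  linear_combination minv (A x) 0 j * k0 + minv (A x) 1 j * k1 + minv (A x) 2 j * k2

lemma pd_smooth {f : Vec → ℝ} (hf : ContDiff ℝ (⊤ : ℕ∞) f) (k : Fin 3) :
    ContDiff ℝ (⊤ : ℕ∞) (fun y => pd k f y) := by
  unfold pd
  exact (hf.fderiv_right (m := (⊤ : ℕ∞)) (by exact_mod_cast le_top)).clm_apply contDiff_const

lemma smooth_diff {f : Vec → ℝ} (hf : ContDiff ℝ (⊤ : ℕ∞) f) (x : Vec) :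
    DifferentiableAt ℝ f x := hf.differentiable (by simp) x

lemma pd_add {f g : Vec → ℝ} (k : Fin 3) (x : Vec) (hf : DifferentiableAt ℝ f x)
    (hg : DifferentiableAt ℝ g x) :
    pd k (fun y => f y + g y) x = pd k f x + pd k g x := by
  simp [pd, fderiv_fun_add hf hg]

lemma pd_sub {f g : Vec → ℝ} (k : Fin 3) (x : Vec) (hf : DifferentiableAt ℝ f x)
    (hg : DifferentiableAt ℝ g x) :
    pd k (fun y => f y - g y) x = pd k f x - pd k g x := by
  simp [pd, fderiv_fun_sub hf hg]

lemma pd_mul {f g : Vec → ℝ} (k : Fin 3) (x : Vec) (hf : DifferentiableAt ℝ f x)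
    (hg : DifferentiableAt ℝ g x) :
    pd k (fun y => f y * g y) x = pd k f x * g x + f x * pd k g x := by
  simp [pd, fderiv_fun_mul hf hg]; ring

lemma pd_cmul {f : Vec → ℝ} (k : Fin 3) (x : Vec) (c : ℝ) (hf : DifferentiableAt ℝ f x) :
    pd k (fun y => c * f y) x = c * pd k f x := by
  simp [pd, fderiv_const_mul hf]

lemma pd_sum {f : Fin 3 → Vec → ℝ} (k : Fin 3) (x : Vec)
    (hf : ∀ i, DifferentiableAt ℝ (f i) x) :
    pd k (fun y => ∑ i, f i y) x = ∑ i, pd k (f i) x := by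
  unfold pd
  rw [fderiv_fun_sum (fun i _ => hf i)]
  simp

/-- Exchange of the parameter derivative and a coordinate derivative. -/
lemma mixed (F : ℝ × Vec → ℝ) (x : Vec) (k : Fin 3) (hF : ContDiffAt ℝ 2 F (0, x)) :
    HasDerivAt (fun s => pd k (fun y => F (s, y)) x)
      (pd k (fun y => deriv (fun s => F (s, y)) 0) x) 0 := by
  have hev : ∀ᶠ q in nhds ((0 : ℝ), x), DifferentiableAt ℝ F q := by
    filter_upwards [hF.eventually (by simp)] with q hq using hq.differentiableAt (by norm_num)
  have hd : DifferentiableAt ℝ (fderiv ℝ F) (0, x) :=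
    (hF.fderiv_right (m := 1) (by norm_num)).differentiableAt (by norm_num)
  have hs : ∀ᶠ s in nhds (0 : ℝ), DifferentiableAt ℝ F (s, x) :=
    (Continuous.tendsto (f := fun s : ℝ => (s, x)) (by fun_prop) 0).eventually hev
  have hy : ∀ᶠ y in nhds x, DifferentiableAt ℝ F ((0 : ℝ), y) :=
    (Continuous.tendsto (f := fun y : Vec => ((0 : ℝ), y)) (by fun_prop) x).eventually hev
  have e1 : (fun s => pd k (fun y => F (s, y)) x) =ᶠ[nhds 0]
      fun s => fderiv ℝ F (s, x) ((0 : ℝ), (Pi.single k 1 : Vec)) := by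
    filter_upwards [hs] with s h
    have h2 : HasFDerivAt (fun y : Vec => (s, y)) (ContinuousLinearMap.inr ℝ ℝ Vec) x :=
      hasFDerivAt_prodMk_right s x
    have := (h.hasFDerivAt.comp x h2).fderiv
    unfold pd
    rw [show (fun y => F (s, y)) = F ∘ (fun y => (s, y)) from rfl, this]
    simp
  have e2 : (fun y => deriv (fun s => F (s, y)) 0) =ᶠ[nhds x]
      fun y => fderiv ℝ F (0, y) ((1 : ℝ), (0 : Vec)) := by
    filter_upwards [hy] with y h
    have h2 : HasFDerivAt (fun s : ℝ => (s, y)) (ContinuousLinearMap.inl ℝ ℝ Vec) 0 :=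
      hasFDerivAt_prodMk_left 0 y
    have := (h.hasFDerivAt.comp (0 : ℝ) h2).hasDerivAt.deriv
    rw [show (fun s => F (s, y)) = F ∘ (fun s => (s, y)) from rfl, this]
    simp
  have hsym := (hF.isSymmSndFDerivAt (by simp)).eq ((1 : ℝ), (0 : Vec)) ((0 : ℝ), (Pi.single k 1 : Vec))
  have r : pd k (fun y => deriv (fun s => F (s, y)) 0) x
      = fderiv ℝ (fderiv ℝ F) (0, x) (1, 0) (0, Pi.single k 1) := by
    rw [hsym]
    unfold pd
    rw [e2.fderiv_eq]
    have h2 : HasFDerivAt (fun y : Vec => ((0 : ℝ), y)) (ContinuousLinearMap.inr ℝ ℝ Vec) x :=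
      hasFDerivAt_prodMk_right 0 x
    have h3 := (hd.hasFDerivAt.comp x h2).clm_apply
      (hasFDerivAt_const ((1 : ℝ), (0 : Vec)) x)
    have h4 := h3.fderiv
    simp only [Function.comp_def] at h4
    rw [h4]
    simp
  rw [r]
  refine HasDerivAt.congr_of_eventuallyEq ?_ e1
  have h2 : HasFDerivAt (fun s : ℝ => (s, x)) (ContinuousLinearMap.inl ℝ ℝ Vec) 0 :=
      hasFDerivAt_prodMk_left 0 x
  have h3 := (hd.hasFDerivAt.comp (0 : ℝ) h2).clm_apply
      (hasFDerivAt_const ((0 : ℝ), (Pi.single k 1 : Vec)) (0 : ℝ))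
  have h4 := h3.hasDerivAt
  simp only [Function.comp_def] at h4
  refine h4.congr_deriv ?_
  simp

/-! ## First variations -/

/-- The perturbed tensor `g + s h`. -/
def pert (g h : Vec → Mtx) (s : ℝ) : Vec → Mtx := fun y a b => g y a b + s * h y a b

/-- Smoothness of all components. -/
def SmM (g : Vec → Mtx) : Prop := ∀ a b, ContDiff ℝ (⊤ : ℕ∞) (fun y => g y a b)

/-- The variation of the Christoffel symbols. -/
def Cc (g h : Vec → Mtx) (k i j : Fin 3) (y : Vec) : ℝ :=
  (1 / 2) * ∑ n, minv (g y) k n * (covD g h i n j y + covD g h j n i y - covD g h n i j y)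

lemma pd_pert {g h : Vec → Mtx} (hg : SmM g) (hh : SmM h) (s : ℝ) (k a b : Fin 3) (x : Vec) :
    pd k (fun y => pert g h s y a b) x
      = pd k (fun y => g y a b) x + s * pd k (fun y => h y a b) x := by
  unfold pert
  rw [pd_add _ _ (smooth_diff (hg a b) x) ((smooth_diff (hh a b) x).const_mul s),
    pd_cmul _ _ _ (smooth_diff (hh a b) x)]

lemma pert_zero (g h : Vec → Mtx) : pert g h 0 = g := by
  funext y a b; simp [pert]

lemma raise2_symm {g h : Vec → Mtx} (hhs : ∀ x i j, h x i j = h x j i)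
    (x : Vec) (i j : Fin 3) : raise2 g h x i j = raise2 g h x j i := by
  unfold raise2
  rw [Finset.sum_comm]
  refine Finset.sum_congr rfl fun a _ => Finset.sum_congr rfl fun b _ => ?_
  rw [hhs x a b]; ring

lemma hasDerivAt_minv_pert {g h : Vec → Mtx} (hgs : ∀ x i j, g x i j = g x j i)
    (hdet : ∀ x, (Matrix.of (g x)).det ≠ 0) (x : Vec) (i j : Fin 3) :
    HasDerivAt (fun s => minv (pert g h s x) i j) (- raise2 g h x i j) 0 := by
  have hA : ∀ i j, ContDiffAt ℝ 1 (fun s : ℝ => pert g h s x i j) 0 := by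
    intro i j; unfold pert; fun_prop
  have hd : (Matrix.of (pert g h 0 x)).det ≠ 0 := by rw [pert_zero]; exact hdet x
  have h1 := ((contDiffAt_minv (fun s : ℝ => pert g h s x) 0 hA hd i j).differentiableAt
    (by norm_num)).hasDerivAt
  refine h1.congr_deriv ?_
  rw [← fderiv_apply_one_eq_deriv, fderiv_minv _ _ _ hA hd]
  rw [pert_zero, raise2]
  congr 1
  refine Finset.sum_congr rfl fun a _ => Finset.sum_congr rfl fun b _ => ?_
  have : fderiv ℝ (fun s : ℝ => pert g h s x a b) 0 1 = h x a b := by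
    rw [fderiv_apply_one_eq_deriv]
    have : HasDerivAt (fun s : ℝ => pert g h s x a b) (h x a b) 0 := by
      unfold pert
      simpa using ((hasDerivAt_id (0 : ℝ)).mul_const (h x a b)).const_add (g x a b)
    exact this.deriv
  rw [this, minv_symm (g x) (hgs x) b j]

lemma Gam_symm {g : Vec → Mtx} (hgs : ∀ x i j, g x i j = g x j i) (k i j : Fin 3) (x : Vec) :
    Gam g k i j x = Gam g k j i x := by
  unfold Gam
  congr 1
  refine Finset.sum_congr rfl fun l _ => ?_
  have : (fun y => g y i j) = (fun y => g y j i) := by funext y; exact hgs y i j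
  rw [this]; ring

lemma covD_symm {g T : Vec → Mtx} (hT : ∀ x i j, T x i j = T x j i) (k i j : Fin 3) (x : Vec) :
    covD g T k i j x = covD g T k j i x := by
  unfold covD
  have : (fun y => T y i j) = (fun y => T y j i) := by funext y; exact hT y i j
  rw [this]
  congr 1
  refine Finset.sum_congr rfl fun l _ => ?_
  rw [hT x l j, hT x l i]; ring

lemma covD2T_symm {g T : Vec → Mtx} (hT : ∀ x i j, T x i j = T x j i) (a b i j : Fin 3)
    (x : Vec) : covD2T g T a b i j x = covD2T g T a b j i x := by
  unfold covD2T
  have : (fun y => covD g T b i j y) = (fun y => covD g T b j i y) := by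
    funext y; exact covD_symm hT b i j y
  rw [this]
  congr 1
  refine Finset.sum_congr rfl fun c _ => ?_
  rw [covD_symm hT c i j, covD_symm hT b c j, covD_symm hT b i c]; ring

lemma Cc_symm {g h : Vec → Mtx} (hhs : ∀ x i j, h x i j = h x j i) (k i j : Fin 3) (x : Vec) :
    Cc g h k i j x = Cc g h k j i x := by
  unfold Cc
  congr 1
  refine Finset.sum_congr rfl fun n _ => ?_
  rw [covD_symm hhs n i j]; ring

lemma hasDerivAt_Gam {g h : Vec → Mtx} (hg : SmM g) (hh : SmM h)
    (hgs : ∀ x i j, g x i j = g x j i) (hhs : ∀ x i j, h x i j = h x j i)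
    (hdet : ∀ x, (Matrix.of (g x)).det ≠ 0) (k i j : Fin 3) (x : Vec) :
    HasDerivAt (fun s => Gam (pert g h s) k i j x) (Cc g h k i j x) 0 := by
  have hlin : ∀ A B : ℝ, HasDerivAt (fun s : ℝ => A + s * B) B 0 := fun A B => by
    simpa using ((hasDerivAt_id (0 : ℝ)).mul_const B).const_add A
  have h1 : HasDerivAt (fun s => Gam (pert g h s) k i j x)
      ((1 / 2) * ∑ l, ((- raise2 g h x k l) *
        (pd i (fun y => g y l j) x + pd j (fun y => g y l i) x - pd l (fun y => g y i j) x)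
        + minv (g x) k l * (pd i (fun y => h y l j) x + pd j (fun y => h y l i) x
            - pd l (fun y => h y i j) x))) 0 := by
    unfold Gam
    simp only [pd_pert hg hh]
    refine HasDerivAt.const_mul _ (HasDerivAt.fun_sum fun l _ => ?_)
    have := (hasDerivAt_minv_pert (h := h) hgs hdet x k l).fun_mul
      (((hlin (pd i (fun y => g y l j) x) (pd i (fun y => h y l j) x)).fun_add
        (hlin (pd j (fun y => g y l i) x) (pd j (fun y => h y l i) x))).fun_sub
        (hlin (pd l (fun y => g y i j) x) (pd l (fun y => h y i j) x)))
    simpa only [pert_zero, zero_mul, add_zero] using this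
  refine h1.congr_deriv ?_
  have hr : ∀ l, raise2 g h x k l = ∑ a, minv (g x) k a * ∑ b, h x a b * minv (g x) b l := by
    intro l
    unfold raise2
    refine Finset.sum_congr rfl fun a _ => ?_
    rw [Finset.mul_sum]
    refine Finset.sum_congr rfl fun b _ => ?_
    rw [minv_symm (g x) (hgs x) b l]; ring
  have hG : ∑ l, raise2 g h x k l * ((1 / 2) *
      (pd i (fun y => g y l j) x + pd j (fun y => g y l i) x - pd l (fun y => g y i j) x))
      = ∑ a, minv (g x) k a * ∑ b, h x a b * Gam g b i j x := by
    simp only [hr, Gam, Fin.sum_univ_three]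
    ring
  have hsplit : ∀ D E : Fin 3 → ℝ, (1 / 2) * ∑ l, ((- raise2 g h x k l) * D l
      + minv (g x) k l * E l) = - ∑ l, raise2 g h x k l * ((1 / 2) * D l)
        + (1 / 2) * ∑ l, minv (g x) k l * E l := by
    intro D E; simp only [Fin.sum_univ_three]; ring
  rw [hsplit, hG]
  unfold Cc
  rw [Finset.mul_sum, Finset.mul_sum, ← Finset.sum_neg_distrib, ← Finset.sum_add_distrib]
  refine Finset.sum_congr rfl fun n _ => ?_
  have e : covD g h i n j x + covD g h j n i x - covD g h n i j x
      = (pd i (fun y => h y n j) x + pd j (fun y => h y n i) x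
            - pd n (fun y => h y i j) x) - 2 * ∑ b, h x n b * Gam g b i j x := by
    unfold covD
    have s1 : ∑ l, (Gam g l i n x * h x l j + Gam g l i j x * h x n l)
        = ∑ l, Gam g l n i x * h x l j + ∑ l, h x n l * Gam g l i j x := by
      rw [← Finset.sum_add_distrib]
      refine Finset.sum_congr rfl fun l _ => ?_
      rw [Gam_symm hgs l i n]; ring
    have s2 : ∑ l, (Gam g l j n x * h x l i + Gam g l j i x * h x n l)
        = ∑ l, Gam g l n j x * h x i l + ∑ l, h x n l * Gam g l i j x := by
      rw [← Finset.sum_add_distrib]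
      refine Finset.sum_congr rfl fun l _ => ?_
      rw [Gam_symm hgs l j n, Gam_symm hgs l j i, hhs x l i]; ring
    have s3 : ∑ l, (Gam g l n i x * h x l j + Gam g l n j x * h x i l)
        = ∑ l, Gam g l n i x * h x l j + ∑ l, Gam g l n j x * h x i l := by
      rw [← Finset.sum_add_distrib]
    rw [s1, s2, s3]; ring
  rw [e]; ring

lemma contDiffAt_Gam {g h : Vec → Mtx} (hg : SmM g) (hh : SmM h)
    (hdet : ∀ x, (Matrix.of (g x)).det ≠ 0) (k i j : Fin 3) (x : Vec) :
    ContDiffAt ℝ 2 (fun q : ℝ × Vec => Gam (pert g h q.1) k i j q.2) (0, x) := by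
  have hs : ∀ f : Vec → ℝ, ContDiff ℝ (⊤ : ℕ∞) f →
      ContDiffAt ℝ 2 (fun q : ℝ × Vec => f q.2) (0, x) := fun f hf =>
    ((hf.of_le (WithTop.coe_le_coe.2 (le_top : (2 : ℕ∞) ≤ ⊤))).comp contDiff_snd).contDiffAt
  have h1 : ∀ m a b, ContDiffAt ℝ 2 (fun q : ℝ × Vec => pd m (fun y => g y a b) q.2) (0, x) :=
    fun m a b => hs _ (pd_smooth (hg a b) m)
  have h2 : ∀ m a b, ContDiffAt ℝ 2 (fun q : ℝ × Vec => pd m (fun y => h y a b) q.2) (0, x) :=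
    fun m a b => hs _ (pd_smooth (hh a b) m)
  have h3 : ∀ a b, ContDiffAt ℝ 2 (fun q : ℝ × Vec => pert g h q.1 q.2 a b) (0, x) := by
    intro a b
    unfold pert
    exact (hs _ (hg a b)).add (contDiffAt_fst.mul (hs _ (hh a b)))
  have h4 : ∀ a b, ContDiffAt ℝ 2 (fun q : ℝ × Vec => minv (pert g h q.1 q.2) a b) (0, x) := by
    refine contDiffAt_minv (fun q : ℝ × Vec => pert g h q.1 q.2) (0, x) h3 ?_
    simp only [pert_zero]; exact hdet x
  unfold Gam
  simp only [pd_pert hg hh]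
  fun_prop

lemma hasDerivAt_pd_Gam {g h : Vec → Mtx} (hg : SmM g) (hh : SmM h)
    (hgs : ∀ x i j, g x i j = g x j i) (hhs : ∀ x i j, h x i j = h x j i)
    (hdet : ∀ x, (Matrix.of (g x)).det ≠ 0) (m k i j : Fin 3) (x : Vec) :
    HasDerivAt (fun s => pd m (fun y => Gam (pert g h s) k i j y) x)
      (pd m (fun y => Cc g h k i j y) x) 0 := by
  have := mixed (fun q : ℝ × Vec => Gam (pert g h q.1) k i j q.2) x m
    (contDiffAt_Gam hg hh hdet k i j x)
  have e : (fun y => deriv (fun s => Gam (pert g h s) k i j y) 0) = fun y => Cc g h k i j y := by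
    funext y; exact (hasDerivAt_Gam hg hh hgs hhs hdet k i j y).deriv
  simp only [e] at this
  exact this

lemma hasDerivAt_Ric {g h : Vec → Mtx} (hg : SmM g) (hh : SmM h)
    (hgs : ∀ x i j, g x i j = g x j i) (hhs : ∀ x i j, h x i j = h x j i)
    (hdet : ∀ x, (Matrix.of (g x)).det ≠ 0) (i j : Fin 3) (x : Vec) :
    HasDerivAt (fun s => RicT (pert g h s) i j x)
      ((∑ k, pd k (fun y => Cc g h k i j y) x) - (∑ k, pd j (fun y => Cc g h k k i y) x)
        + ∑ k, ∑ l, ((Cc g h k k l x * Gam g l i j x + Gam g k k l x * Cc g h l i j x)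
          - (Cc g h k j l x * Gam g l k i x + Gam g k j l x * Cc g h l k i x))) 0 := by
  have hG := fun k i j => hasDerivAt_Gam hg hh hgs hhs hdet k i j x
  have hP := fun m k i j => hasDerivAt_pd_Gam hg hh hgs hhs hdet m k i j x
  have := ((HasDerivAt.fun_sum (u := Finset.univ) fun k _ => hP k k i j).fun_sub
    (HasDerivAt.fun_sum (u := Finset.univ) fun k _ => hP j k k i)).fun_add
    (HasDerivAt.fun_sum (u := Finset.univ) fun k _ =>
      (HasDerivAt.fun_sum (u := Finset.univ) fun l _ =>
        ((hG k k l).fun_mul (hG l i j)).fun_sub ((hG k j l).fun_mul (hG l k i))))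
  simp only [pert_zero] at this
  exact this

/-! ## Covariant calculus at a point -/

lemma smooth_minv {g : Vec → Mtx} (hg : SmM g)
    (hdet : ∀ x, (Matrix.of (g x)).det ≠ 0) (i j : Fin 3) :
    ContDiff ℝ (⊤ : ℕ∞) (fun y => minv (g y) i j) :=
  contDiff_iff_contDiffAt.2 fun x =>
    contDiffAt_minv g x (fun a b => (hg a b).contDiffAt) (hdet x) i j

lemma smooth_Gam {g : Vec → Mtx} (hg : SmM g)
    (hdet : ∀ x, (Matrix.of (g x)).det ≠ 0) (k i j : Fin 3) :
    ContDiff ℝ (⊤ : ℕ∞) (fun y => Gam g k i j y) := by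
  have h1 := fun a b => smooth_minv hg hdet a b
  have h2 := fun m a b => pd_smooth (hg a b) m
  unfold Gam
  fun_prop

lemma smooth_covD {g T : Vec → Mtx} (hg : SmM g) (hT : SmM T)
    (hdet : ∀ x, (Matrix.of (g x)).det ≠ 0) (k i j : Fin 3) :
    ContDiff ℝ (⊤ : ℕ∞) (fun y => covD g T k i j y) := by
  have h1 := fun a b c => smooth_Gam hg hdet a b c
  have h2 := fun m a b => pd_smooth (hT a b) m
  have h3 : ∀ a b, ContDiff ℝ (⊤ : ℕ∞) (fun y => T y a b) := hT
  unfold covD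
  fun_prop

lemma pd_minv {g : Vec → Mtx} (hg : SmM g) (hgs : ∀ x i j, g x i j = g x j i)
    (hdet : ∀ x, (Matrix.of (g x)).det ≠ 0) (k i j : Fin 3) (x : Vec) :
    pd k (fun y => minv (g y) i j) x
      = - ∑ l, (Gam g i k l x * minv (g x) l j + Gam g j k l x * minv (g x) i l) := by
  have h1 : pd k (fun y => minv (g y) i j) x = - ∑ a, ∑ b, minv (g x) i a * minv (g x) b j *
      pd k (fun y => g y a b) x :=
    fderiv_minv g x (Pi.single k 1) (fun a b => ((hg a b).of_le (by exact_mod_cast le_top)).contDiffAt) (hdet x) i j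
  rw [h1]
  congr 1
  have hd : ∀ m a b, pd m (fun y => g y a b) x = pd m (fun y => g y b a) x := by
    intro m a b
    have : (fun y => g y a b) = (fun y => g y b a) := by funext y; exact hgs y a b
    rw [this]
  have e : ∀ l, Gam g i k l x * minv (g x) l j
      = ∑ a, (1 / 2) * (minv (g x) i a * minv (g x) l j * (pd k (fun y => g y a l) x
        + pd l (fun y => g y a k) x - pd a (fun y => g y l k) x)) := by
    intro l
    unfold Gam
    rw [Finset.mul_sum, Finset.sum_mul]
    refine Finset.sum_congr rfl fun a _ => ?_
    rw [hd a k l]; ring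
  have e' : ∀ l, Gam g j k l x * minv (g x) i l
      = ∑ a, (1 / 2) * (minv (g x) i l * minv (g x) a j * (pd k (fun y => g y l a) x
        + pd l (fun y => g y a k) x - pd a (fun y => g y l k) x)) := by
    intro l
    unfold Gam
    rw [Finset.mul_sum, Finset.sum_mul]
    refine Finset.sum_congr rfl fun a _ => ?_
    rw [hd a k l, hd k a l, minv_symm (g x) (hgs x) j a]; ring
  rw [Finset.sum_add_distrib]
  simp only [e, e']
  rw [Finset.sum_comm (f := fun l a => (1 / 2) * (minv (g x) i a * minv (g x) l j *
    (pd k (fun y => g y a l) x + pd l (fun y => g y a k) x - pd a (fun y => g y l k) x)))]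
  rw [← Finset.sum_add_distrib]
  refine Finset.sum_congr rfl fun a _ => ?_
  rw [← Finset.sum_add_distrib]
  refine Finset.sum_congr rfl fun b _ => ?_
  ring

/-- The covariant derivative of `Cc`, in terms of second covariant derivatives of `h`. -/
def DCc (g h : Vec → Mtx) (m k i j : Fin 3) (x : Vec) : ℝ :=
  (1 / 2) * ∑ n, minv (g x) k n * (covD2T g h m i n j x + covD2T g h m j n i x
    - covD2T g h m n i j x)

lemma pd_covD (g h : Vec → Mtx) (m b i j : Fin 3) (x : Vec) :
    pd m (fun y => covD g h b i j y) x = covD2T g h m b i j x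
      + ∑ c, (Gam g c m b x * covD g h c i j x
        + Gam g c m i x * covD g h b c j x
        + Gam g c m j x * covD g h b i c x) := by
  unfold covD2T; ring

lemma pd_Cc {g h : Vec → Mtx} (hg : SmM g) (hh : SmM h)
    (hgs : ∀ x i j, g x i j = g x j i)
    (hdet : ∀ x, (Matrix.of (g x)).det ≠ 0) (m k i j : Fin 3) (x : Vec) :
    pd m (fun y => Cc g h k i j y) x = DCc g h m k i j x
      + ∑ c, (- Gam g k m c x * Cc g h c i j x + Gam g c m i x * Cc g h k c j x
        + Gam g c m j x * Cc g h k i c x) := by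
  have hu := fun a b => smooth_diff (smooth_minv hg hdet a b) x
  have hE := fun a b c => smooth_diff (smooth_covD hg hh hdet a b c) x
  have h1 : pd m (fun y => Cc g h k i j y) x = (1 / 2) * ∑ n,
      (pd m (fun y => minv (g y) k n) x * (covD g h i n j x + covD g h j n i x - covD g h n i j x)
      + minv (g x) k n * (pd m (fun y => covD g h i n j y) x + pd m (fun y => covD g h j n i y) x
        - pd m (fun y => covD g h n i j y) x)) := by
    unfold Cc
    have hS : ∀ n, DifferentiableAt ℝ
        (fun y => covD g h i n j y + covD g h j n i y - covD g h n i j y) x := fun n =>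
      ((hE i n j).fun_add (hE j n i)).fun_sub (hE n i j)
    have hm : ∀ n, DifferentiableAt ℝ (fun y => minv (g y) k n *
        (covD g h i n j y + covD g h j n i y - covD g h n i j y)) x := fun n =>
      (hu k n).fun_mul (hS n)
    rw [pd_cmul m x _ (DifferentiableAt.fun_sum fun n _ => hm n), pd_sum m x hm]
    congr 1
    refine Finset.sum_congr rfl fun n _ => ?_
    rw [pd_mul m x (hu k n) (hS n), pd_sub m x ((hE i n j).fun_add (hE j n i)) (hE n i j),
      pd_add m x (hE i n j) (hE j n i)]
  rw [h1]
  simp only [pd_minv hg hgs hdet, pd_covD, DCc, Cc]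
  simp only [Fin.sum_univ_three]
  ring

lemma dRic_eq {g h : Vec → Mtx} (hg : SmM g) (hh : SmM h)
    (hgs : ∀ x i j, g x i j = g x j i) (hhs : ∀ x i j, h x i j = h x j i)
    (hdet : ∀ x, (Matrix.of (g x)).det ≠ 0) (i j : Fin 3) (x : Vec) :
    ((∑ k, pd k (fun y => Cc g h k i j y) x) - (∑ k, pd j (fun y => Cc g h k k i y) x)
        + ∑ k, ∑ l, ((Cc g h k k l x * Gam g l i j x + Gam g k k l x * Cc g h l i j x)
          - (Cc g h k j l x * Gam g l k i x + Gam g k j l x * Cc g h l k i x)))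
      = ∑ k, DCc g h k k i j x - ∑ k, DCc g h j k k i x := by
  simp only [pd_Cc hg hh hgs hdet]
  have c1 : ∀ k, Cc g h k 1 0 x = Cc g h k 0 1 x := fun k => Cc_symm hhs k 1 0 x
  have c2 : ∀ k, Cc g h k 2 0 x = Cc g h k 0 2 x := fun k => Cc_symm hhs k 2 0 x
  have c3 : ∀ k, Cc g h k 2 1 x = Cc g h k 1 2 x := fun k => Cc_symm hhs k 2 1 x
  have g1 : ∀ k, Gam g k 1 0 x = Gam g k 0 1 x := fun k => Gam_symm hgs k 1 0 x
  have g2 : ∀ k, Gam g k 2 0 x = Gam g k 0 2 x := fun k => Gam_symm hgs k 2 0 x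
  have g3 : ∀ k, Gam g k 2 1 x = Gam g k 1 2 x := fun k => Gam_symm hgs k 2 1 x
  fin_cases i <;> fin_cases j <;>
  · simp only [Fin.sum_univ_three, Fin.zero_eta, Fin.mk_one, Fin.reduceFinMk, Fin.isValue,
      c1, c2, c3, g1, g2, g3]
    ring

/-- Hessian of the trace. -/
lemma hess_tr {g h : Vec → Mtx} (hg : SmM g) (hh : SmM h)
    (hgs : ∀ x i j, g x i j = g x j i)
    (hdet : ∀ x, (Matrix.of (g x)).det ≠ 0) (i j : Fin 3) (x : Vec) :
    pd i (fun y => pd j (fun z => trT g h z) y) x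
      - ∑ k, Gam g k i j x * pd k (fun z => trT g h z) x
      = ∑ a, ∑ b, minv (g x) a b * covD2T g h i j a b x := by
  have hu := fun a b y => smooth_diff (smooth_minv hg hdet a b) y
  have hE := fun a b c y => smooth_diff (smooth_covD hg hh hdet a b c) y
  have hH := fun a b y => smooth_diff (hh a b) y
  have h1 : ∀ k y, pd k (fun z => trT g h z) y = ∑ a, ∑ b, minv (g y) a b * covD g h k a b y := by
    intro k y
    unfold trT
    rw [pd_sum k y (fun a => DifferentiableAt.fun_sum fun b _ => (hu a b y).fun_mul (hH a b y))]
    have e : ∀ a, pd k (fun z => ∑ b, minv (g z) a b * h z a b) y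
        = ∑ b, (pd k (fun z => minv (g z) a b) y * h y a b
          + minv (g y) a b * pd k (fun z => h z a b) y) := by
      intro a
      rw [pd_sum k y (fun b => (hu a b y).fun_mul (hH a b y))]
      refine Finset.sum_congr rfl fun b _ => ?_
      rw [pd_mul k y (hu a b y) (hH a b y)]
    simp only [e]
    simp only [pd_minv hg hgs hdet, covD, Fin.sum_univ_three]
    ring
  simp only [h1]
  rw [pd_sum i x (fun a => DifferentiableAt.fun_sum fun b _ => (hu a b x).fun_mul (hE j a b x))]
  have e : ∀ a, pd i (fun z => ∑ b, minv (g z) a b * covD g h j a b z) x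
      = ∑ b, (pd i (fun z => minv (g z) a b) x * covD g h j a b x
        + minv (g x) a b * pd i (fun z => covD g h j a b z) x) := by
    intro a
    rw [pd_sum i x (fun b => (hu a b x).fun_mul (hE j a b x))]
    refine Finset.sum_congr rfl fun b _ => ?_
    rw [pd_mul i x (hu a b x) (hE j a b x)]
  simp only [e]
  simp only [pd_minv hg hgs hdet, pd_covD, Fin.sum_univ_three]
  ring

/-- Double trace of the variation of the Ricci tensor. -/
lemma trace_dRic {g h : Vec → Mtx} (hg : SmM g) (hh : SmM h)
    (hgs : ∀ x i j, g x i j = g x j i) (hhs : ∀ x i j, h x i j = h x j i)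
    (hdet : ∀ x, (Matrix.of (g x)).det ≠ 0) (x : Vec) :
    ∑ i, ∑ j, minv (g x) i j * (∑ k, DCc g h k k i j x - ∑ k, DCc g h j k k i x)
      = - lapl g (fun y => trT g h y) x
        + ∑ i, ∑ j, ∑ a, ∑ b, minv (g x) i a * minv (g x) j b * covD2T g h a b i j x := by
  unfold lapl
  simp only [hess_tr hg hh hgs hdet]
  unfold DCc
  have u1 : minv (g x) 1 0 = minv (g x) 0 1 := minv_symm _ (hgs x) 1 0
  have u2 : minv (g x) 2 0 = minv (g x) 0 2 := minv_symm _ (hgs x) 2 0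
  have u3 : minv (g x) 2 1 = minv (g x) 1 2 := minv_symm _ (hgs x) 2 1
  have d1 : ∀ a b, covD2T g h a b 1 0 x = covD2T g h a b 0 1 x :=
    fun a b => covD2T_symm hhs a b 1 0 x
  have d2 : ∀ a b, covD2T g h a b 2 0 x = covD2T g h a b 0 2 x :=
    fun a b => covD2T_symm hhs a b 2 0 x
  have d3 : ∀ a b, covD2T g h a b 2 1 x = covD2T g h a b 1 2 x :=
    fun a b => covD2T_symm hhs a b 2 1 x
  simp only [Fin.sum_univ_three, Fin.isValue, u1, u2, u3, d1, d2, d3]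
  ring

lemma hasDerivAt_pert (g h : Vec → Mtx) (x : Vec) (a b : Fin 3) :
    HasDerivAt (fun s => pert g h s x a b) (h x a b) 0 := by
  unfold pert
  simpa using ((hasDerivAt_id (0 : ℝ)).mul_const (h x a b)).const_add (g x a b)

lemma hasDerivAt_scalR {g h : Vec → Mtx} (hg : SmM g) (hh : SmM h)
    (hgs : ∀ x i j, g x i j = g x j i) (hhs : ∀ x i j, h x i j = h x j i)
    (hdet : ∀ x, (Matrix.of (g x)).det ≠ 0) (x : Vec) :
    HasDerivAt (fun s => scalR (pert g h s) x)
      (- lapl g (fun y => trT g h y) x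
        + (∑ i, ∑ j, ∑ a, ∑ b, minv (g x) i a * minv (g x) j b * covD2T g h a b i j x)
        - (∑ i, ∑ j, raise2 g h x i j * RicT g i j x)) 0 := by
  have hU := fun i j => hasDerivAt_minv_pert (h := h) hgs hdet x i j
  have hR := fun i j => hasDerivAt_Ric hg hh hgs hhs hdet i j x
  have := HasDerivAt.fun_sum (u := Finset.univ) fun i _ =>
      (HasDerivAt.fun_sum (u := Finset.univ) fun j _ => (hU i j).fun_mul (hR i j))
  simp only [pert_zero, dRic_eq hg hh hgs hhs hdet] at this
  refine HasDerivAt.congr_deriv (f := fun s => scalR (pert g h s) x) this ?_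
  rw [← trace_dRic hg hh hgs hhs hdet x]
  simp only [Finset.sum_add_distrib, neg_mul, Finset.sum_neg_distrib]
  ring

lemma hasDerivAt_trT {g h : Vec → Mtx} (p w : Vec → Mtx)
    (hgs : ∀ x i j, g x i j = g x j i)
    (hdet : ∀ x, (Matrix.of (g x)).det ≠ 0) (x : Vec) :
    HasDerivAt (fun s => trT (pert g h s) (pert p w s) x)
      (trT g w x - ∑ i, ∑ j, raise2 g p x i j * h x i j) 0 := by
  have hU := fun i j => hasDerivAt_minv_pert (h := h) hgs hdet x i j
  have hP := fun i j => hasDerivAt_pert p w x i j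
  have := HasDerivAt.fun_sum (u := Finset.univ) fun i _ =>
      (HasDerivAt.fun_sum (u := Finset.univ) fun j _ => (hU i j).fun_mul (hP i j))
  simp only [pert_zero] at this
  refine HasDerivAt.congr_deriv (f := fun s => trT (pert g h s) (pert p w s) x) this ?_
  have u1 : minv (g x) 1 0 = minv (g x) 0 1 := minv_symm _ (hgs x) 1 0
  have u2 : minv (g x) 2 0 = minv (g x) 0 2 := minv_symm _ (hgs x) 2 0
  have u3 : minv (g x) 2 1 = minv (g x) 1 2 := minv_symm _ (hgs x) 2 1
  simp only [trT, raise2, Fin.sum_univ_three, Fin.isValue, u1, u2, u3]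
  ring

lemma hasDerivAt_normSqT {g h : Vec → Mtx} (p w : Vec → Mtx)
    (hgs : ∀ x i j, g x i j = g x j i) (hps : ∀ x i j, p x i j = p x j i)
    (hhs : ∀ x i j, h x i j = h x j i)
    (hdet : ∀ x, (Matrix.of (g x)).det ≠ 0) (x : Vec) :
    HasDerivAt (fun s => normSqT (pert g h s) (pert p w s) x)
      (2 * (∑ i, ∑ j, raise2 g p x i j * w x i j)
        - 2 * (∑ i, ∑ j, raise2 g h x i j * ∑ k, ∑ l, minv (g x) k l * p x i k * p x j l)) 0 := by
  have hU := fun i j => hasDerivAt_minv_pert (h := h) hgs hdet x i j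
  have hP := fun i j => hasDerivAt_pert p w x i j
  have := HasDerivAt.fun_sum (u := Finset.univ) fun i _ =>
    (HasDerivAt.fun_sum (u := Finset.univ) fun j _ =>
      (HasDerivAt.fun_sum (u := Finset.univ) fun k _ =>
        (HasDerivAt.fun_sum (u := Finset.univ) fun l _ =>
          (((hU i k).fun_mul (hU j l)).fun_mul (hP i j)).fun_mul (hP k l))))
  simp only [pert_zero] at this
  refine HasDerivAt.congr_deriv (f := fun s => normSqT (pert g h s) (pert p w s) x) this ?_
  have u1 : minv (g x) 1 0 = minv (g x) 0 1 := minv_symm _ (hgs x) 1 0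
  have u2 : minv (g x) 2 0 = minv (g x) 0 2 := minv_symm _ (hgs x) 2 0
  have u3 : minv (g x) 2 1 = minv (g x) 1 2 := minv_symm _ (hgs x) 2 1
  have p1 : p x 1 0 = p x 0 1 := hps x 1 0
  have p2 : p x 2 0 = p x 0 2 := hps x 2 0
  have p3 : p x 2 1 = p x 1 2 := hps x 2 1
  have r1 : raise2 g h x 1 0 = raise2 g h x 0 1 := raise2_symm hhs x 1 0
  have r2 : raise2 g h x 2 0 = raise2 g h x 0 2 := raise2_symm hhs x 2 0
  have r3 : raise2 g h x 2 1 = raise2 g h x 1 2 := raise2_symm hhs x 2 1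
  have e : ∀ i j, raise2 g p x i j = ∑ a, ∑ b, minv (g x) i a * minv (g x) j b * p x a b :=
    fun i j => rfl
  simp only [e, Fin.sum_univ_three, Fin.isValue, u1, u2, u3, p1, p2, p3, r1, r2, r3]
  ring

lemma hasDerivAt_Hc {g p h ϖ : Vec → Mtx} (hg : SmM g) (hh : SmM h)
    (hgs : ∀ x i j, g x i j = g x j i) (hps : ∀ x i j, p x i j = p x j i)
    (hhs : ∀ x i j, h x i j = h x j i)
    (hdet : ∀ x, (Matrix.of (g x)).det ≠ 0) (x : Vec) :
    HasDerivAt (fun s => Hc (pert g h s) (pert p ϖ s) x) (DHlin g p h ϖ x) 0 := by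
  have h1 := hasDerivAt_scalR hg hh hgs hhs hdet x
  have h2 := hasDerivAt_trT (h := h) p ϖ hgs hdet x
  have h3 := hasDerivAt_normSqT p ϖ hgs hps hhs hdet x
  have := (h1.fun_add ((h2.fun_pow 2).const_mul (1 / 2))).fun_sub h3
  simp only [pert_zero] at this
  refine HasDerivAt.congr_deriv (f := fun s => Hc (pert g h s) (pert p ϖ s) x) this ?_
  unfold DHlin
  simp only [Nat.cast_ofNat, Nat.add_one_sub_one, pow_one]
  ring

lemma hasDerivAt_divT {g p h ϖ : Vec → Mtx} (hg : SmM g) (hp : SmM p) (hh : SmM h)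
    (hϖ : SmM ϖ)
    (hgs : ∀ x i j, g x i j = g x j i) (hps : ∀ x i j, p x i j = p x j i)
    (hhs : ∀ x i j, h x i j = h x j i)
    (hdet : ∀ x, (Matrix.of (g x)).det ≠ 0) (i : Fin 3) (x : Vec) :
    HasDerivAt (fun s => divT (pert g h s) (pert p ϖ s) i x) (DMlin g p h ϖ i x) 0 := by
  have hU := fun i j => hasDerivAt_minv_pert (h := h) hgs hdet x i j
  have hP := fun i j => hasDerivAt_pert p ϖ x i j
  have hG := fun k i j => hasDerivAt_Gam hg hh hgs hhs hdet k i j x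
  have hlin : ∀ A B : ℝ, HasDerivAt (fun s : ℝ => A + s * B) B 0 := fun A B => by
    simpa using ((hasDerivAt_id (0 : ℝ)).mul_const B).const_add A
  have hD : ∀ k l, HasDerivAt (fun s => covD (pert g h s) (pert p ϖ s) k l i x)
      (covD g ϖ k l i x - ∑ m, (Cc g h m k l x * p x m i + Cc g h m k i x * p x l m)) 0 := by
    intro k l
    unfold covD
    simp only [pd_pert hp hϖ]
    have := (hlin (pd k (fun y => p y l i) x) (pd k (fun y => ϖ y l i) x)).fun_sub
      (HasDerivAt.fun_sum (u := Finset.univ) fun m _ =>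
        ((hG m k l).fun_mul (hP m i)).fun_add ((hG m k i).fun_mul (hP l m)))
    simp only [pert_zero] at this
    refine this.congr_deriv ?_
    simp only [Fin.sum_univ_three]
    ring
  have := HasDerivAt.fun_sum (u := Finset.univ) fun k _ =>
    (HasDerivAt.fun_sum (u := Finset.univ) fun l _ => (hU k l).fun_mul (hD k l))
  simp only [pert_zero] at this
  refine HasDerivAt.congr_deriv (f := fun s => divT (pert g h s) (pert p ϖ s) i x) this ?_
  have s1 : ∑ k, ∑ l, minv (g x) k l * ∑ m, Cc g h m k l x * p x m i
      = ∑ j, (∑ a, minv (g x) j a * p x i a) *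
        ∑ k, ∑ l, minv (g x) k l * (covD g h k l j x - (1 / 2) * covD g h j k l x) := by
    unfold Cc
    have u1 : minv (g x) 1 0 = minv (g x) 0 1 := minv_symm _ (hgs x) 1 0
    have u2 : minv (g x) 2 0 = minv (g x) 0 2 := minv_symm _ (hgs x) 2 0
    have u3 : minv (g x) 2 1 = minv (g x) 1 2 := minv_symm _ (hgs x) 2 1
    have d1 : ∀ a, covD g h a 1 0 x = covD g h a 0 1 x := fun a => covD_symm hhs a 1 0 x
    have d2 : ∀ a, covD g h a 2 0 x = covD g h a 0 2 x := fun a => covD_symm hhs a 2 0 x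
    have d3 : ∀ a, covD g h a 2 1 x = covD g h a 1 2 x := fun a => covD_symm hhs a 2 1 x
    simp only [hps x _ i, Fin.sum_univ_three, Fin.isValue, u1, u2, u3, d1, d2, d3]
    ring
  have s2 : ∑ k, ∑ l, minv (g x) k l * ∑ m, Cc g h m k i x * p x l m
      = (1 / 2) * (∑ k, ∑ l, raise2 g p x k l * covD g h i k l x) := by
    unfold Cc raise2
    have u1 : minv (g x) 1 0 = minv (g x) 0 1 := minv_symm _ (hgs x) 1 0
    have u2 : minv (g x) 2 0 = minv (g x) 0 2 := minv_symm _ (hgs x) 2 0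
    have u3 : minv (g x) 2 1 = minv (g x) 1 2 := minv_symm _ (hgs x) 2 1
    have p1 : p x 1 0 = p x 0 1 := hps x 1 0
    have p2 : p x 2 0 = p x 0 2 := hps x 2 0
    have p3 : p x 2 1 = p x 1 2 := hps x 2 1
    have d1 : ∀ a, covD g h a 1 0 x = covD g h a 0 1 x := fun a => covD_symm hhs a 1 0 x
    have d2 : ∀ a, covD g h a 2 0 x = covD g h a 0 2 x := fun a => covD_symm hhs a 2 0 x
    have d3 : ∀ a, covD g h a 2 1 x = covD g h a 1 2 x := fun a => covD_symm hhs a 2 1 x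
    fin_cases i <;>
    · simp only [Fin.sum_univ_three, Fin.isValue, Fin.zero_eta, Fin.mk_one, Fin.reduceFinMk,
        u1, u2, u3, d1, d2, d3, p1, p2, p3]
      ring
  unfold DMlin
  rw [← s1, ← s2]
  unfold divT
  simp only [Finset.sum_add_distrib, neg_mul, Finset.sum_neg_distrib, mul_sub, mul_add,
    Finset.sum_sub_distrib]
  ring

/-- **Lemma 2.5.**  For smooth `g, π, h, ϖ` with `g` a Riemannian metric,
the derivatives at `s = 0` of `s ↦ H(g+sh, π+sϖ)` and `s ↦ M(g+sh, π+sϖ)` are given by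
the formulas `DH[g,π](h,ϖ)` and `DM[g,π](h,ϖ)` above. -/
theorem linearized_constraints
    (g p h ϖ : Vec → Mtx)
    (hg : ContDiff ℝ (⊤ : ℕ∞) g) (hp : ContDiff ℝ (⊤ : ℕ∞) p)
    (hh : ContDiff ℝ (⊤ : ℕ∞) h) (hϖ : ContDiff ℝ (⊤ : ℕ∞) ϖ)
    (hgs : ∀ x i j, g x i j = g x j i) (hps : ∀ x i j, p x i j = p x j i)
    (hhs : ∀ x i j, h x i j = h x j i) (hϖs : ∀ x i j, ϖ x i j = ϖ x j i)
    (hgpos : ∀ x, (Matrix.of (g x)).PosDef) :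
    ∀ x : Vec,
      HasDerivAt
        (fun s : ℝ => Hc (fun y a b => g y a b + s * h y a b)
          (fun y a b => p y a b + s * ϖ y a b) x)
        (DHlin g p h ϖ x) 0 ∧
      ∀ i : Fin 3,
        HasDerivAt
          (fun s : ℝ => divT (fun y a b => g y a b + s * h y a b)
            (fun y a b => p y a b + s * ϖ y a b) i x)
          (DMlin g p h ϖ i x) 0 := by
  intro x
  have sm : ∀ T : Vec → Mtx, ContDiff ℝ (⊤ : ℕ∞) T → SmM T := fun T hT a b =>
    contDiff_pi.1 (contDiff_pi.1 hT a) b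
  have hdet : ∀ x, (Matrix.of (g x)).det ≠ 0 := fun x => (hgpos x).det_pos.ne'
  exact ⟨hasDerivAt_Hc (sm g hg) (sm h hh) hgs hps hhs hdet x,
    fun i => hasDerivAt_divT (sm g hg) (sm p hp) (sm h hh) (sm ϖ hϖ) hgs hps hhs hdet i x⟩
end
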